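/- For every positive integer k, the integral defining φ_k(x) converges absolutely for every x ≥ 0, the function φ_k is continuous and bounded on [0,∞), and φ_k(x) = O(x^{-1/4}) as x → ∞. -/

import Mathlib

open scoped Real Topology
open Complex Filter MeasureTheory Finset Asymptotics

/-- The analytic extension of `s ↦ ((s-1) * ζ(s))^k` to `s = 1` (where its value is `1`). -/
noncomputable def zetaPowAux (k : ℕ) : ℂ → ℂ :=
  Function.update (fun s : ℂ => ((s - 1) * riemannZeta s) ^ k) 1 1

/-- `lam k j` is the Taylor coefficient `λ_{j,k}`, i.e. the `j`-th derivative at `s = 1` of the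
analytic extension of `(s-1)^k ζ(s)^k`; these numbers are real, and we record their real part. -/
noncomputable def lam (k j : ℕ) : ℝ :=
  (iteratedDeriv j (zetaPowAux k) 1).re

/-- The Fourier coefficients `ℓ_{n,k}` for `n ≥ -k` (an integer index). -/
noncomputable def ell (k : ℕ) (n : ℤ) : ℝ :=
  if 1 ≤ n then
    (-1 : ℝ) ^ n.toNat *
      ∑ j ∈ Finset.Icc 1 n.toNat,
        ((n.toNat - 1).choose (j - 1) : ℝ) * lam k (j + k) / (Nat.factorial (j + k))
  else
    (-1 : ℝ) ^ k *
      ∑ j ∈ Finset.range ((k + n).toNat + 1),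
        ((k - j).choose (-n).toNat : ℝ) * (-1 : ℝ) ^ j * lam k j / (Nat.factorial j)

/-- The Lindelöf Hypothesis: `ζ(1/2 + it) = O(|t|^ε)` for every `ε > 0`. -/
def LindelofHypothesis : Prop :=
  ∀ ε : ℝ, 0 < ε → ∃ C : ℝ, ∀ t : ℝ, 1 ≤ |t| →
    ‖riemannZeta (1 / 2 + t * Complex.I)‖ ≤ C * |t| ^ ε

/-- `dk k n` is the Piltz divisor function `d_k(n)`: the number of representations of `n` as an
ordered product of `k` positive integers (the `k`-th Dirichlet-convolution power of `ζ`). -/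
noncomputable def dk (k n : ℕ) : ℕ := (ArithmeticFunction.zeta ^ k) n

/-- The coefficients `a_{j,k}` of the polynomial `P_k`. -/
noncomputable def aCoef (k j : ℕ) : ℝ :=
  (-1 : ℝ) ^ (k - 1 - j) *
    ∑ i ∈ Finset.range (k - 1 - j + 1), (-1 : ℝ) ^ i * lam k i / (Nat.factorial i)

/-- The error term `Δ_k(x) = (Σ_{1 ≤ n ≤ x} d_k(n)) - x P_k(log x)` in the Piltz divisor
problem. -/
noncomputable def Deltak (k : ℕ) (x : ℝ) : ℝ :=
  (∑ n ∈ Finset.Icc 1 ⌊x⌋₊, (dk k n : ℝ)) -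
    x * ∑ j ∈ Finset.range k, aCoef k j / (Nat.factorial j) * (Real.log x) ^ j

/-- The `n`-th Laguerre polynomial. -/
noncomputable def laguerre (n : ℕ) (u : ℝ) : ℝ :=
  ∑ j ∈ Finset.range (n + 1), (n.choose j : ℝ) * (-1 : ℝ) ^ j * u ^ j / (Nat.factorial j)

/-- The Bessel function of the first kind of order `0`. -/
noncomputable def besselJ0 (u : ℝ) : ℝ :=
  ∑' m : ℕ, (-1 : ℝ) ^ m * (u / 2) ^ (2 * m) / ((Nat.factorial m : ℝ) ^ 2)

/-- `φ_k(x) = ∫_1^∞ Δ_k(r) J₀(2 √(x log r)) r⁻² dr`. -/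
noncomputable def phik (k : ℕ) (x : ℝ) : ℝ :=
  ∫ r in Set.Ioi (1 : ℝ), Deltak k r * besselJ0 (2 * Real.sqrt (x * Real.log r)) / r ^ 2

/-!
The function `φ_k` is the transform `g ↦ ∫_1^∞ g(r) J₀(2 √(x log r)) dr` of
`g(r) = Δ_k(r) / r ^ 2`. As `|J₀(u)| ≤ 1` and `J₀(u) = O(u ^ (-1/2))`, integrability of `g` gives
absolute convergence, continuity and boundedness, and integrability of `g(r) (log r) ^ (-1/4)`
gives the decay. Both follow from a power saving `Δ_k(r) = O(r ^ (1 - δ))`.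

The saving comes from the hyperbola method: `D_{k+1}(x) / x = ∑_{n ≤ x} f(x / n) / n` with
`f(x) = D_k(x) / x`, and this operation preserves the property of being a polynomial in `log x` up
to `O(x ^ (-δ))`. Splitting the sum at `√x`, the range `n ≤ √x` only sees the error term of `f`,
and on `n > √x` the sum is compared with an integral because `x f(x)` is monotone.

To identify the polynomial with `P_k`, compare Laplace transforms as `u → 0⁺`:
`f(t) ↦ ∫_1^∞ f(t) t ^ (-(1 + u)) dt` sends `(log t) ^ j` to `j! / u ^ (j + 1)`, a power-saving
error to a bounded function, and `D_k(t) / t` to `ζ(1 + u) ^ k / (1 + u)`. So the polynomial is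
determined by the polar part of the latter at `u = 0`, which is read off from the expansions of
`(u ζ(1 + u)) ^ k` and `1 / (1 + u)`.
-/

/-! ### Power bounds and logarithmic-polynomial expansions on `[1, ∞)` -/

theorem isBigO_rpow_rpow_of_le {a b : ℝ} (hab : a ≤ b) :
    (fun x : ℝ => x ^ a) =O[𝓟 (Set.Ici 1)] fun x : ℝ => x ^ b := by
  refine isBigO_principal.2 ⟨1, fun x (hx : 1 ≤ x) => ?_⟩
  have hx0 : 0 ≤ x := zero_le_one.trans hx
  rw [one_mul, Real.norm_of_nonneg (Real.rpow_nonneg hx0 a),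
    Real.norm_of_nonneg (Real.rpow_nonneg hx0 b)]
  exact Real.rpow_le_rpow_of_exponent_le hx hab

theorem isBigO_log_rpow {ε : ℝ} (hε : 0 < ε) :
    Real.log =O[𝓟 (Set.Ici 1)] fun x : ℝ => x ^ ε := by
  refine isBigO_principal.2 ⟨ε⁻¹, fun x (hx : 1 ≤ x) => ?_⟩
  have hx0 : 0 ≤ x := zero_le_one.trans hx
  rw [Real.norm_of_nonneg (Real.log_nonneg hx), Real.norm_of_nonneg (Real.rpow_nonneg hx0 ε),
    inv_mul_eq_div]
  exact Real.log_le_rpow_div hx0 hε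

theorem isBigO_log_pow_rpow (j : ℕ) {ε : ℝ} (hε : 0 < ε) :
    (fun x => Real.log x ^ j) =O[𝓟 (Set.Ici 1)] fun x : ℝ => x ^ ε := by
  have hj : (0 : ℝ) < j + 1 := by positivity
  have hpow : (fun x : ℝ => (x ^ (ε / (j + 1))) ^ j) =O[𝓟 (Set.Ici 1)]
      fun x : ℝ => x ^ (ε / (j + 1) * j) := by
    refine isBigO_principal.2 ⟨1, fun x (hx : 1 ≤ x) => ?_⟩
    rw [one_mul, Real.rpow_mul_natCast (zero_le_one.trans hx)]
  refine (((isBigO_log_rpow (div_pos hε hj)).pow j).trans hpow).trans (isBigO_rpow_rpow_of_le ?_)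
  rw [div_mul_eq_mul_div, div_le_iff₀ hj]
  nlinarith

theorem isBigO_eval_log_rpow (Q : Polynomial ℝ) {ε : ℝ} (hε : 0 < ε) :
    (fun x => Q.eval (Real.log x)) =O[𝓟 (Set.Ici 1)] fun x : ℝ => x ^ ε := by
  simp only [Polynomial.eval_eq_sum_range]
  exact .fun_sum fun j _ => (isBigO_log_pow_rpow j hε).const_mul_left _

theorem isBigO_div_self_rpow {f : ℝ → ℝ} {a : ℝ}
    (hf : f =O[𝓟 (Set.Ici 1)] fun x : ℝ => x ^ a) :
    (fun x => f x / x) =O[𝓟 (Set.Ici 1)] fun x : ℝ => x ^ (a - 1) := by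
  obtain ⟨C, hC⟩ := isBigO_principal.1 hf
  refine isBigO_principal.2 ⟨C, fun x (hx : 1 ≤ x) => ?_⟩
  have hx0 : 0 < x := zero_lt_one.trans_le hx
  rw [Real.rpow_sub_one hx0.ne', norm_div, norm_div, ← mul_div_assoc]
  gcongr
  exact hC x hx

theorem integrableOn_of_isBigO_principal {f g : ℝ → ℝ} {s : Set ℝ} (hs : MeasurableSet s)
    (hf : AEStronglyMeasurable f (volume.restrict s)) (hfg : f =O[𝓟 s] g)
    (hg : IntegrableOn g s) : IntegrableOn f s := by
  obtain ⟨C, hC⟩ := isBigO_principal.1 hfg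
  exact (hg.norm.const_mul C).mono' hf ((ae_restrict_iff' hs).2 (.of_forall hC))

theorem integrableOn_Ioi_one_of_isBigO_rpow {f : ℝ → ℝ} {a : ℝ} (hm : Measurable f) (ha : a < -1)
    (hf : f =O[𝓟 (Set.Ici 1)] fun x : ℝ => x ^ a) : IntegrableOn f (Set.Ioi 1) :=
  integrableOn_of_isBigO_principal measurableSet_Ioi hm.aestronglyMeasurable
    (hf.mono (principal_mono.2 Set.Ioi_subset_Ici_self)) (integrableOn_Ioi_rpow_of_lt ha one_pos)

theorem isBigO_integral_Ioi_rpow {f : ℝ → ℝ} {a : ℝ} (ha : a < -1)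
    (hf : f =O[𝓟 (Set.Ici 1)] fun x : ℝ => x ^ a) :
    (fun x => ∫ u in Set.Ioi x, f u) =O[𝓟 (Set.Ici 1)] fun x : ℝ => x ^ (a + 1) := by
  obtain ⟨C, hC⟩ := isBigO_principal.1 hf
  refine isBigO_principal.2 ⟨C / -(a + 1), fun x (hx : 1 ≤ x) => ?_⟩
  have hx0 : 0 < x := zero_lt_one.trans_le hx
  have hbound : ∀ᵐ u ∂volume.restrict (Set.Ioi x), ‖f u‖ ≤ C * u ^ a := by
    refine (ae_restrict_iff' measurableSet_Ioi).2 (.of_forall fun u (hu : x < u) => ?_)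
    rw [← Real.norm_of_nonneg (Real.rpow_nonneg (hx0.trans hu).le a)]
    exact hC u (hx.trans hu.le)
  calc ‖∫ u in Set.Ioi x, f u‖ ≤ ∫ u in Set.Ioi x, C * u ^ a :=
        norm_integral_le_of_norm_le ((integrableOn_Ioi_rpow_of_lt ha hx0).const_mul C) hbound
    _ = C / -(a + 1) * ‖x ^ (a + 1)‖ := by
        rw [integral_const_mul, integral_Ioi_rpow_of_lt ha hx0,
          Real.norm_of_nonneg (Real.rpow_nonneg hx0.le _), neg_div, div_neg, neg_mul, mul_neg,
          div_mul_eq_mul_div, mul_div_assoc]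

theorem isBigO_intervalIntegral_sub_integral_Ioi_rpow {f : ℝ → ℝ} {a : ℝ} (hm : Measurable f)
    (ha : a < -1) (hf : f =O[𝓟 (Set.Ici 1)] fun x : ℝ => x ^ a) :
    (fun x => (∫ u in (1 : ℝ)..x, f u) - ∫ u in Set.Ioi 1, f u) =O[𝓟 (Set.Ici 1)]
      fun x : ℝ => x ^ (a + 1) := by
  refine (isBigO_integral_Ioi_rpow ha hf).neg_left.congr'
    (Set.EqOn.eventuallyEq fun x (hx : 1 ≤ x) => ?_) .rfl
  rw [← intervalIntegral.integral_Ioi_sub_Ioi (integrableOn_Ioi_one_of_isBigO_rpow hm ha hf) hx,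
    sub_sub_cancel_left]

/-- `f` has a logarithmic-polynomial expansion with main term `Q` if
`f(x) = Q(log x) + O(x^(-δ))` on `[1, ∞)` for some `δ > 0`. -/
def HasLogPolyExpansion (f : ℝ → ℝ) (Q : Polynomial ℝ) : Prop :=
  ∃ δ : ℝ, 0 < δ ∧
    (fun x => f x - Q.eval (Real.log x)) =O[𝓟 (Set.Ici 1)] fun x : ℝ => x ^ (-δ)

theorem HasLogPolyExpansion.add {f g : ℝ → ℝ} {P Q : Polynomial ℝ}
    (hf : HasLogPolyExpansion f P) (hg : HasLogPolyExpansion g Q) :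
    HasLogPolyExpansion (fun x => f x + g x) (P + Q) := by
  obtain ⟨δ, hδ, hf⟩ := hf
  obtain ⟨δ', hδ', hg⟩ := hg
  refine ⟨min δ δ', lt_min hδ hδ', ?_⟩
  have hf' := hf.trans (isBigO_rpow_rpow_of_le (neg_le_neg (min_le_left δ δ')))
  have hg' := hg.trans (isBigO_rpow_rpow_of_le (neg_le_neg (min_le_right δ δ')))
  simpa only [Polynomial.eval_add, add_sub_add_comm] using hf'.add hg'

theorem HasLogPolyExpansion.congr {f g : ℝ → ℝ} {Q : Polynomial ℝ}
    (hf : HasLogPolyExpansion f Q) (hfg : Set.EqOn f g (Set.Ici 1)) : HasLogPolyExpansion g Q := by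
  obtain ⟨δ, hδ, hf⟩ := hf
  refine ⟨δ, hδ, hf.congr' (Set.EqOn.eventuallyEq fun x hx => ?_) .rfl⟩
  rw [hfg hx]

theorem HasLogPolyExpansion.isBigO_rpow {f : ℝ → ℝ} {Q : Polynomial ℝ}
    (hf : HasLogPolyExpansion f Q) {ε : ℝ} (hε : 0 < ε) :
    f =O[𝓟 (Set.Ici 1)] fun x : ℝ => x ^ ε := by
  obtain ⟨δ, hδ, hf⟩ := hf
  refine ((hf.trans (isBigO_rpow_rpow_of_le (by linarith))).add
    (isBigO_eval_log_rpow Q hε)).congr_left fun x => ?_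
  exact sub_add_cancel _ _

theorem exists_derivative_eq (Q : Polynomial ℝ) : ∃ P : Polynomial ℝ, P.derivative = Q := by
  induction Q using Polynomial.induction_on' with
  | add P Q hP hQ =>
    obtain ⟨P', rfl⟩ := hP
    obtain ⟨Q', rfl⟩ := hQ
    exact ⟨P' + Q', Polynomial.derivative_add⟩
  | monomial n a =>
    refine ⟨Polynomial.monomial (n + 1) (a / (n + 1)), ?_⟩
    rw [Polynomial.derivative_monomial, Nat.add_sub_cancel, Nat.cast_succ,
      div_mul_cancel₀ a (by positivity)]

theorem intervalIntegrable_eval_log_div (Q : Polynomial ℝ) {x : ℝ} (hx : 1 ≤ x) :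
    IntervalIntegrable (fun u => Q.eval (Real.log u) / u) volume 1 x := by
  have hpos : ∀ u ∈ Set.uIcc 1 x, u ≠ 0 := fun u hu =>
    (one_pos.trans_le (Set.uIcc_of_le hx ▸ hu).1).ne'
  exact ((Q.continuous.comp_continuousOn (Real.continuousOn_log.mono hpos)).div continuousOn_id
    hpos).intervalIntegrable

theorem integral_eval_derivative_log_div (Q : Polynomial ℝ) {x : ℝ} (hx : 1 ≤ x) :
    ∫ u in (1 : ℝ)..x, Q.derivative.eval (Real.log u) / u = Q.eval (Real.log x) - Q.eval 0 := by
  rw [intervalIntegral.integral_eq_sub_of_hasDerivAt (f := fun u => Q.eval (Real.log u))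
    (fun u hu => ?_) (intervalIntegrable_eval_log_div _ hx), Real.log_one]
  have hu : u ≠ 0 := (one_pos.trans_le (Set.uIcc_of_le hx ▸ hu).1).ne'
  exact (Q.hasDerivAt _).comp u (Real.hasDerivAt_log hu)

theorem HasLogPolyExpansion.integral {f : ℝ → ℝ} {Q : Polynomial ℝ} (hm : Measurable f)
    (hf : HasLogPolyExpansion f Q) :
    ∃ R, HasLogPolyExpansion (fun x => ∫ u in (1 : ℝ)..x, f u / u) R := by
  obtain ⟨δ, hδ, hf⟩ := hf
  obtain ⟨P, rfl⟩ := exists_derivative_eq Q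
  set e : ℝ → ℝ := fun u => (f u - P.derivative.eval (Real.log u)) / u
  have hme : Measurable e := by fun_prop
  have ha : -δ - 1 < -1 := by linarith
  have he := isBigO_div_self_rpow hf
  set c : ℝ := ∫ u in Set.Ioi 1, e u
  refine ⟨P + Polynomial.C (c - P.eval 0), δ, hδ, ?_⟩
  refine (isBigO_intervalIntegral_sub_integral_Ioi_rpow hme ha he).congr'
    (Set.EqOn.eventuallyEq fun x (hx : 1 ≤ x) => ?_) (by simp only [sub_add_cancel]; rfl)
  have hie : IntervalIntegrable e volume 1 x :=
    (intervalIntegrable_iff_integrableOn_Ioc_of_le hx).2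
      ((integrableOn_Ioi_one_of_isBigO_rpow hme ha he).mono_set Set.Ioc_subset_Ioi_self)
  have hsplit : ∫ u in (1 : ℝ)..x, f u / u =
      (∫ u in (1 : ℝ)..x, e u) + (P.eval (Real.log x) - P.eval 0) := by
    rw [← integral_eval_derivative_log_div P hx,
      ← intervalIntegral.integral_add hie (intervalIntegrable_eval_log_div _ hx)]
    simp only [e, sub_div, sub_add_cancel]
  simp only [hsplit, Polynomial.eval_add, Polynomial.eval_C]
  ring

/-! ### The harmonic convolution -/

/-- The multiplicative convolution `∑_{n ≤ x} f(x / n) / n`. It maps `D_k(x) / x` to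
`D_{k+1}(x) / x`, where `D_k` is the summatory function of `d_k`. -/
noncomputable def harmonicConv (f : ℝ → ℝ) (x : ℝ) : ℝ := ∑ n ∈ Icc 1 ⌊x⌋₊, f (x / n) / n

theorem measurable_harmonicConv {f : ℝ → ℝ} (hf : Measurable f) : Measurable (harmonicConv f) := by
  have hsum : Measurable fun p : ℕ × ℝ => ∑ n ∈ Icc 1 p.1, f (p.2 / n) / n :=
    measurable_from_prod_countable_right fun m =>
      Finset.measurable_fun_sum (Icc 1 m) fun _ _ => by fun_prop
  exact hsum.comp (Nat.measurable_floor.prodMk measurable_id)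

theorem harmonicConv_add (f g : ℝ → ℝ) (x : ℝ) :
    harmonicConv (fun y => f y + g y) x = harmonicConv f x + harmonicConv g x := by
  simp only [harmonicConv, add_div, sum_add_distrib]

theorem harmonicConv_congr {f g : ℝ → ℝ} (hfg : Set.EqOn f g (Set.Ici 1)) :
    harmonicConv f = harmonicConv g := by
  funext x
  refine sum_congr rfl fun n hn => ?_
  obtain ⟨hn1, hnx⟩ := mem_Icc.1 hn
  rw [hfg (x := x / n)]
  rw [Set.mem_Ici, one_le_div₀ (by positivity)]
  exact (Nat.le_floor_iff' (by lia)).1 hnx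

theorem hasLogPolyExpansion_sum_inv :
    HasLogPolyExpansion (fun x => ∑ n ∈ Icc 1 ⌊x⌋₊, (n : ℝ)⁻¹)
      (Polynomial.X + Polynomial.C Real.eulerMascheroniConstant) := by
  refine ⟨1, one_pos, isBigO_principal.2 ⟨2, fun x (hx : 1 ≤ x) => ?_⟩⟩
  have hx0 : 0 < x := zero_lt_one.trans_le hx
  set n := ⌊x⌋₊
  have hn : 1 ≤ n := (Nat.one_le_floor_iff x).2 hx
  have hn' : (1 : ℝ) ≤ n := mod_cast hn
  have hH : ∑ i ∈ Icc 1 n, (i : ℝ)⁻¹ = harmonic n := by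
    rw [harmonic_eq_sum_Icc, Rat.cast_sum]
    push_cast
    rfl
  have hlower := Real.eulerMascheroniSeq_lt_eulerMascheroniConstant n
  have hupper := Real.eulerMascheroniConstant_lt_eulerMascheroniSeq' n
  rw [Real.eulerMascheroniSeq] at hlower
  rw [Real.eulerMascheroniSeq', if_neg (by lia)] at hupper
  have hlog : Real.log n ≤ Real.log x := Real.log_le_log (by linarith) (Nat.floor_le hx0.le)
  have hxn : x ≤ n + 1 := (Nat.lt_floor_add_one x).le
  have hlog' : Real.log x ≤ Real.log (n + 1) := Real.log_le_log hx0 hxn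
  have hstep : Real.log (n + 1) - Real.log n ≤ 2 * x⁻¹ := by
    rw [← Real.log_div (by positivity) (by positivity)]
    refine (Real.log_le_sub_one_of_pos (by positivity)).trans ?_
    rw [← div_eq_mul_inv, add_div, div_self (by positivity), add_sub_cancel_left,
      div_le_div_iff₀ (by positivity) hx0]
    linarith
  dsimp only
  rw [hH, Real.rpow_neg_one, Real.norm_of_nonneg (inv_nonneg.2 hx0.le), Polynomial.eval_add,
    Polynomial.eval_X, Polynomial.eval_C, Real.norm_eq_abs, abs_le]
  constructor <;> linarith

theorem hasLogPolyExpansion_harmonicConv_const (a : ℝ) :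
    HasLogPolyExpansion (harmonicConv fun _ => a)
      (Polynomial.C a * (Polynomial.X + Polynomial.C Real.eulerMascheroniConstant)) := by
  obtain ⟨δ, hδ, h⟩ := hasLogPolyExpansion_sum_inv
  refine ⟨δ, hδ, (h.const_mul_left a).congr_left fun x => ?_⟩
  simp only [harmonicConv, div_eq_mul_inv, Polynomial.eval_mul, Polynomial.eval_C, mul_sub, mul_sum]

section Integral

variable {f : ℝ → ℝ} {x : ℝ} {n : ℕ}

theorem comp_div_div_div (f : ℝ → ℝ) (hn : n ≠ 0) (u : ℝ) :
    f (u / n) / n / u = (n : ℝ)⁻¹ ^ 2 * (f (u / n) / (u / n)) := by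
  rcases eq_or_ne u 0 with rfl | hu
  · simp
  · field_simp

theorem intervalIntegrable_comp_div_div_div (hn : n ≠ 0)
    (hf : IntervalIntegrable (fun v => f v / v) volume 1 (x / n)) :
    IntervalIntegrable (fun u => f (u / n) / n / u) volume n x := by
  have hn0 : (n : ℝ) ≠ 0 := Nat.cast_ne_zero.2 hn
  have h := (hf.comp_mul_left (c := (n : ℝ)⁻¹)).const_mul ((n : ℝ)⁻¹ ^ 2)
  rw [div_inv_eq_mul, div_inv_eq_mul, one_mul, div_mul_cancel₀ x hn0] at h
  simpa only [comp_div_div_div f hn, inv_mul_eq_div] using h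

theorem integral_comp_div_div_div (f : ℝ → ℝ) (hn : n ≠ 0) :
    ∫ u in (n : ℝ)..x, f (u / n) / n / u = (∫ v in (1 : ℝ)..(x / n), f v / v) / n := by
  have hn0 : (n : ℝ) ≠ 0 := Nat.cast_ne_zero.2 hn
  simp only [comp_div_div_div f hn]
  rw [intervalIntegral.integral_const_mul,
    intervalIntegral.integral_comp_div (fun v => f v / v) hn0, div_self hn0, smul_eq_mul]
  field_simp

theorem harmonicConv_eq_sum_indicator {u : ℝ} (hu : 0 ≤ u) (hux : u ≤ x) :
    harmonicConv f u =
      ∑ n ∈ Icc 1 ⌊x⌋₊, (Set.Ici (n : ℝ)).indicator (fun u => f (u / n) / n) u := by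
  simp only [Set.indicator_apply, Set.mem_Ici]
  rw [← sum_filter, harmonicConv]
  congr 1
  ext n
  simp only [mem_filter, mem_Icc, ← Nat.le_floor_iff hu]
  have := Nat.floor_mono hux
  lia

theorem integral_harmonicConv_div (hf : IntervalIntegrable (fun v => f v / v) volume 1 x)
    (hx : 1 ≤ x) :
    ∫ u in (1 : ℝ)..x, harmonicConv f u / u =
      harmonicConv (fun y => ∫ v in (1 : ℝ)..y, f v / v) x := by
  let F (n : ℕ) (u : ℝ) : ℝ := f (u / n) / n / u
  have hbounds {n : ℕ} (hn : n ∈ Icc 1 ⌊x⌋₊) : 1 ≤ (n : ℝ) ∧ n ≤ x :=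
    ⟨mod_cast (mem_Icc.1 hn).1, (Nat.le_floor_iff (by linarith)).1 (mem_Icc.1 hn).2⟩
  have hinteg (n) (hn : n ∈ Icc 1 ⌊x⌋₊) : IntegrableOn (F n) (Set.Icc n x) := by
    obtain ⟨hn1, hnx⟩ := hbounds hn
    rw [integrableOn_Icc_iff_integrableOn_Ioc, ← intervalIntegrable_iff_integrableOn_Ioc_of_le hnx]
    have hxn : x / n ≤ x := div_le_self (by linarith) hn1
    refine intervalIntegrable_comp_div_div_div (Nat.one_le_iff_ne_zero.1 (mem_Icc.1 hn).1)
      (hf.mono_set (Set.uIcc_subset_uIcc_left ?_))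
    exact Set.mem_uIcc_of_le ((one_le_div₀ (by linarith)).2 hnx) hxn
  have hinter (n) (hn : n ∈ Icc 1 ⌊x⌋₊) : Set.Icc 1 x ∩ Set.Ici (n : ℝ) = Set.Icc (n : ℝ) x := by
    rw [← Set.Ici_inter_Iic, Set.inter_right_comm, Set.Ici_inter_Ici, sup_eq_right.2 (hbounds hn).1,
      Set.Ici_inter_Iic]
  calc ∫ u in (1 : ℝ)..x, harmonicConv f u / u
      = ∫ u in Set.Icc 1 x, harmonicConv f u / u := by
        rw [intervalIntegral.integral_of_le hx, integral_Icc_eq_integral_Ioc]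
    _ = ∫ u in Set.Icc 1 x, ∑ n ∈ Icc 1 ⌊x⌋₊, (Set.Ici (n : ℝ)).indicator (F n) u := by
        refine setIntegral_congr_fun measurableSet_Icc fun u hu => ?_
        rw [harmonicConv_eq_sum_indicator (zero_le_one.trans hu.1) hu.2, sum_div]
        simp only [Set.indicator_apply, ite_div, zero_div, F]
    _ = ∑ n ∈ Icc 1 ⌊x⌋₊, ∫ u in Set.Icc (n : ℝ) x, F n u := by
        rw [integral_finsetSum]
        · refine sum_congr rfl fun n hn => ?_
          rw [setIntegral_indicator measurableSet_Ici, hinter n hn]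
        · intro n hn
          rw [integrable_indicator_iff measurableSet_Ici, IntegrableOn,
            Measure.restrict_restrict measurableSet_Ici, Set.inter_comm, hinter n hn]
          exact hinteg n hn
    _ = harmonicConv (fun y => ∫ v in (1 : ℝ)..y, f v / v) x := by
        refine sum_congr rfl fun n hn => ?_
        rw [integral_Icc_eq_integral_Ioc, ← intervalIntegral.integral_of_le (hbounds hn).2]
        exact integral_comp_div_div_div f (Nat.one_le_iff_ne_zero.1 (mem_Icc.1 hn).1)

end Integral

theorem exists_hasLogPolyExpansion_harmonicConv_eval_log (Q : Polynomial ℝ) :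
    ∃ R, HasLogPolyExpansion (harmonicConv fun x => Q.eval (Real.log x)) R := by
  induction Q using Polynomial.induction_on' with
  | add P Q hP hQ =>
    obtain ⟨P', hP'⟩ := hP
    obtain ⟨Q', hQ'⟩ := hQ
    refine ⟨P' + Q', (hP'.add hQ').congr fun x _ => ?_⟩
    simp only [Polynomial.eval_add, harmonicConv_add]
  | monomial n a =>
    induction n generalizing a with
    | zero => simpa using ⟨_, hasLogPolyExpansion_harmonicConv_const a⟩
    | succ n ih =>
      set P := Polynomial.monomial n (a * (n + 1))
      have hP : (Polynomial.monomial (n + 1) a).derivative = P := by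
        rw [Polynomial.derivative_monomial, Nat.add_sub_cancel, Nat.cast_succ]
      obtain ⟨R, hR⟩ := ih (a * (n + 1))
      obtain ⟨S, hS⟩ := hR.integral (measurable_harmonicConv (by fun_prop))
      refine ⟨S, hS.congr fun x hx => ?_⟩
      dsimp only
      rw [integral_harmonicConv_div (intervalIntegrable_eval_log_div P hx) hx]
      refine congr_fun (harmonicConv_congr fun y hy => ?_) x
      rw [← hP, integral_eval_derivative_log_div _ hy]
      simp

/-! ### The hyperbola method -/

theorem abs_sum_Ioc_sub_integral_le_of_antitoneOn {h : ℝ → ℝ} {N : ℕ} {x : ℝ} (hNx : N ≤ x)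
    (hanti : AntitoneOn h (Set.Icc N x)) (hnonneg : ∀ t ∈ Set.Icc (N : ℝ) x, 0 ≤ h t) :
    |∑ n ∈ Ioc N ⌊x⌋₊, h n - ∫ t in (N : ℝ)..x, h t| ≤ h N := by
  set M := ⌊x⌋₊
  have hNM : N ≤ M := Nat.le_floor hNx
  have hNM' : (N : ℝ) ≤ M := mod_cast hNM
  have hMx : (M : ℝ) ≤ x := Nat.floor_le ((Nat.cast_nonneg N).trans hNx)
  have hM : (M : ℝ) ∈ Set.Icc (N : ℝ) x := ⟨hNM', hMx⟩
  have hantiM : AntitoneOn h (Set.Icc N M) := hanti.mono (Set.Icc_subset_Icc_right hMx)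
  have hsplit := intervalIntegral.integral_add_adjacent_intervals (μ := volume)
    (AntitoneOn.intervalIntegrable ((Set.uIcc_of_le hNM').symm ▸ hantiM))
    (AntitoneOn.intervalIntegrable (u := h) (a := M) (b := x)
      ((Set.uIcc_of_le hMx).symm ▸ hanti.mono (Set.Icc_subset_Icc_left hNM')))
  have hrest_nonneg : 0 ≤ ∫ t in (M : ℝ)..x, h t :=
    intervalIntegral.integral_nonneg hMx fun t ht => hnonneg t ⟨hNM'.trans ht.1, ht.2⟩
  have hrest_le : ∫ t in (M : ℝ)..x, h t ≤ h M := by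
    have hle (t) (ht : t ∈ Set.uIoc (M : ℝ) x) : ‖h t‖ ≤ h M := by
      rw [Set.uIoc_of_le hMx] at ht
      have ht' : t ∈ Set.Icc (N : ℝ) x := ⟨hNM'.trans ht.1.le, ht.2⟩
      exact (Real.norm_of_nonneg (hnonneg t ht')).trans_le (hanti hM ht' ht.1.le)
    have hlen : |x - M| ≤ 1 := by
      rw [abs_of_nonneg (sub_nonneg.2 hMx)]
      linarith [Nat.lt_floor_add_one x]
    calc ∫ t in (M : ℝ)..x, h t ≤ h M * |x - M| :=
          (le_abs_self _).trans (intervalIntegral.norm_integral_le_of_norm_le_const hle)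
      _ ≤ h M := mul_le_of_le_one_right (hnonneg M hM) hlen
  have hlower := hantiM.sum_le_integral_Ico hNM
  have hupper := hantiM.integral_le_sum_Ico hNM
  have hshift : ∑ i ∈ Ico N M, h ((i + 1 : ℕ) : ℝ) = ∑ n ∈ Ioc N M, h n := by
    rw [sum_Ico_add' (fun n : ℕ => h n) N M 1, Ico_add_one_add_one_eq_Ioc]
  have hends : h N + ∑ n ∈ Ioc N M, h n = ∑ n ∈ Ico N M, h n + h M := by
    rw [add_sum_Ioc_eq_sum_Icc (f := fun n : ℕ => h n) hNM, sum_Ico_add_eq_sum_Icc hNM]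
  have := hnonneg M hM
  rw [abs_le]
  constructor <;> linarith

theorem integral_comp_div_div (f : ℝ → ℝ) {a b x : ℝ} (ha : 0 < a) (hb : 0 < b) (hx : 0 < x) :
    ∫ t in a..b, f (x / t) / t = ∫ u in (x / b)..(x / a), f u / u := by
  have hpos {t : ℝ} (ht : t ∈ Set.uIcc a b) : 0 < t := (lt_min ha hb).trans_le ht.1
  have hsubst := intervalIntegral.integral_deriv_smul_comp_of_deriv_nonpos
    (f := fun t => x / t) (f' := fun t => -(x / t ^ 2)) (g := fun u => f u / u)
    (continuousOn_const.div continuousOn_id fun t ht => (hpos ht).ne')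
    (fun t ht => ((hasDerivAt_const t x).div (hasDerivAt_id' t)
      (hpos (Set.Ioo_subset_Icc_self ht)).ne').congr_deriv (by ring))
    (fun t _ => neg_nonpos.2 (by positivity))
  rw [intervalIntegral.integral_symm (x / a), ← hsubst, ← intervalIntegral.integral_neg]
  refine intervalIntegral.integral_congr fun t ht => ?_
  have := hpos ht
  simp only [Function.comp_apply, smul_eq_mul]
  field_simp

section Hyperbola

variable {f : ℝ → ℝ} {x : ℝ} {N : ℕ}

theorem abs_sum_Ioc_comp_div_sub_integral_le (hmono : MonotoneOn (fun u => u * f u) (Set.Ici 1))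
    (hf1 : 0 ≤ f 1) (hN : N ≠ 0) (hNx : N ≤ x) :
    |∑ n ∈ Ioc N ⌊x⌋₊, f (x / n) / n - ∫ u in (1 : ℝ)..(x / N), f u / u| ≤ f (x / N) / N := by
  have hN0 : (0 : ℝ) < N := mod_cast Nat.pos_of_ne_zero hN
  have hx : 0 < x := hN0.trans_le hNx
  have hterm {t : ℝ} (ht : t ∈ Set.Icc (N : ℝ) x) : f (x / t) / t = x / t * f (x / t) / x := by
    have := hN0.trans_le ht.1
    field_simp
  have hmem {t : ℝ} (ht : t ∈ Set.Icc (N : ℝ) x) : x / t ∈ Set.Ici 1 :=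
    (one_le_div₀ (hN0.trans_le ht.1)).2 ht.2
  have hanti : AntitoneOn (fun t => f (x / t) / t) (Set.Icc N x) := by
    intro s hs t ht hst
    have hle := div_le_div_of_nonneg_left hx.le (hN0.trans_le hs.1) hst
    simpa only [hterm hs, hterm ht] using
      div_le_div_of_nonneg_right (hmono (hmem ht) (hmem hs) hle) hx.le
  have hnonneg (t) (ht : t ∈ Set.Icc (N : ℝ) x) : 0 ≤ f (x / t) / t := by
    have := hmono Set.self_mem_Ici (hmem ht) (hmem ht)
    rw [hterm ht]
    exact div_nonneg (by linarith) hx.le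
  have := abs_sum_Ioc_sub_integral_le_of_antitoneOn hNx hanti hnonneg
  rwa [integral_comp_div_div f hN0 hx hx, div_self hx.ne'] at this

theorem intervalIntegrable_div_of_monotoneOn_mul
    (hmono : MonotoneOn (fun u => u * f u) (Set.Ici 1)) (hx : 1 ≤ x) :
    IntervalIntegrable (fun u => f u / u) volume 1 x := by
  have hsub : Set.uIcc 1 x ⊆ Set.Ici 1 := Set.uIcc_of_le hx ▸ Set.Icc_subset_Ici_self
  have hpos {u : ℝ} (hu : u ∈ Set.uIcc 1 x) : u ≠ 0 := (one_pos.trans_le (hsub hu)).ne'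
  refine ((hmono.mono hsub).intervalIntegrable.mul_continuousOn (g := fun u => (u ^ 2)⁻¹)
    ((continuousOn_pow 2).inv₀ fun u hu => pow_ne_zero 2 (hpos hu))).congr fun u hu => ?_
  have := hpos (Set.uIoc_subset_uIcc hu)
  field_simp

theorem abs_sum_Icc_comp_div_le {C δ : ℝ} (hδ : 0 ≤ δ) (hC : 0 ≤ C)
    (hf : ∀ y, 1 ≤ y → |f y| ≤ C * y ^ (-δ)) (hNx : N ≤ x) :
    |∑ n ∈ Icc 1 N, f (x / n) / n| ≤ C * ((x / N) ^ (-δ) * ∑ n ∈ Icc 1 N, (n : ℝ)⁻¹) := by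
  simp only [mul_sum]
  refine (abs_sum_le_sum_abs _ _).trans (sum_le_sum fun n hn => ?_)
  obtain ⟨hn1, hnN⟩ := mem_Icc.1 hn
  have hn0 : (0 : ℝ) < n := mod_cast hn1
  have hN0 : (0 : ℝ) < N := hn0.trans_le (Nat.cast_le.2 hnN)
  have hx : 0 < x := hN0.trans_le hNx
  have hle : x / N ≤ x / n := by gcongr
  calc |f (x / n) / n| = |f (x / n)| * (n : ℝ)⁻¹ := by
        rw [abs_div, abs_of_pos hn0, div_eq_mul_inv]
    _ ≤ C * (x / n) ^ (-δ) * (n : ℝ)⁻¹ := by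
        gcongr
        exact hf _ (((one_le_div₀ hN0).2 hNx).trans hle)
    _ ≤ C * (x / N) ^ (-δ) * (n : ℝ)⁻¹ := by
        have := Real.rpow_le_rpow_of_nonpos (div_pos hx hN0) hle (neg_nonpos.2 hδ)
        gcongr
    _ = C * ((x / N) ^ (-δ) * (n : ℝ)⁻¹) := mul_assoc _ _ _

end Hyperbola

theorem sqrt_le_div_floor_sqrt {x : ℝ} (hx : 1 ≤ x) : √x ≤ x / ⌊√x⌋₊ := by
  have hN : (0 : ℝ) < ⌊√x⌋₊ := mod_cast Nat.floor_pos.2 (Real.one_le_sqrt.2 hx)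
  rw [le_div_iff₀ hN]
  calc √x * ⌊√x⌋₊ ≤ √x * √x := by gcongr; exact Nat.floor_le (Real.sqrt_nonneg x)
    _ = x := Real.mul_self_sqrt (zero_le_one.trans hx)

theorem div_floor_sqrt_le {x : ℝ} (hx : 1 ≤ x) : x / ⌊√x⌋₊ ≤ 2 * √x := by
  have hs : 1 ≤ √x := Real.one_le_sqrt.2 hx
  have hN : (1 : ℝ) ≤ ⌊√x⌋₊ := mod_cast Nat.floor_pos.2 hs
  rw [div_le_iff₀ (by linarith)]
  calc x = √x * √x := (Real.mul_self_sqrt (zero_le_one.trans hx)).symm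
    _ ≤ √x * (2 * ⌊√x⌋₊) := by gcongr; linarith [Nat.lt_floor_add_one √x]
    _ = 2 * √x * ⌊√x⌋₊ := by ring

theorem floor_sqrt_le_floor {x : ℝ} (hx : 1 ≤ x) : ⌊√x⌋₊ ≤ ⌊x⌋₊ :=
  Nat.floor_mono ((Real.sqrt_le_left (zero_le_one.trans hx)).2 (le_self_pow₀ hx two_ne_zero))

theorem tendsto_div_floor_sqrt :
    Tendsto (fun x : ℝ => x / ⌊√x⌋₊) (𝓟 (Set.Ici 1)) (𝓟 (Set.Ici 1)) :=
  tendsto_principal_principal.2 fun _ hx =>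
    (Real.one_le_sqrt.2 hx).trans (sqrt_le_div_floor_sqrt hx)

theorem isBigO_div_floor_sqrt_rpow (a : ℝ) :
    (fun x : ℝ => (x / ⌊√x⌋₊) ^ a) =O[𝓟 (Set.Ici 1)] fun x : ℝ => x ^ (a / 2) := by
  refine isBigO_principal.2 ⟨max 1 (2 ^ a), fun x (hx : 1 ≤ x) => ?_⟩
  have hs : 0 < √x := Real.sqrt_pos.2 (zero_lt_one.trans_le hx)
  have hlower := sqrt_le_div_floor_sqrt hx
  have hsqrt : √x ^ a = x ^ (a / 2) := by
    rw [Real.sqrt_eq_rpow, ← Real.rpow_mul (zero_le_one.trans hx), one_div_mul_eq_div]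
  rw [← hsqrt, Real.norm_of_nonneg (by positivity), Real.norm_of_nonneg (by positivity)]
  rcases le_total a 0 with ha | ha
  · calc (x / ⌊√x⌋₊) ^ a ≤ 1 * √x ^ a :=
          (Real.rpow_le_rpow_of_nonpos hs hlower ha).trans_eq (one_mul _).symm
      _ ≤ max 1 (2 ^ a) * √x ^ a := by gcongr; exact le_max_left _ _
  · calc (x / ⌊√x⌋₊) ^ a ≤ (2 * √x) ^ a := by gcongr; exact div_floor_sqrt_le hx
      _ = 2 ^ a * √x ^ a := Real.mul_rpow zero_le_two hs.le
      _ ≤ max 1 (2 ^ a) * √x ^ a := by gcongr; exact le_max_right _ _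

theorem isBigO_sum_Icc_floor_sqrt_comp_div {e : ℝ → ℝ} {δ : ℝ} (hδ : 0 < δ)
    (he : e =O[𝓟 (Set.Ici 1)] fun x : ℝ => x ^ (-δ)) :
    (fun x => ∑ n ∈ Icc 1 ⌊√x⌋₊, e (x / n) / n) =O[𝓟 (Set.Ici 1)]
      fun x : ℝ => x ^ (-(δ / 4)) := by
  obtain ⟨C, hC0, hC⟩ := he.exists_nonneg
  rw [isBigOWith_principal] at hC
  have hC' (y : ℝ) (hy : 1 ≤ y) : |e y| ≤ C * y ^ (-δ) :=
    (hC y hy).trans_eq (by rw [Real.norm_of_nonneg (by positivity)])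
  have hhead : (fun x => ∑ n ∈ Icc 1 ⌊√x⌋₊, e (x / n) / n) =O[𝓟 (Set.Ici 1)]
      fun x : ℝ => (x / ⌊√x⌋₊) ^ (-δ) * ∑ n ∈ Icc 1 ⌊x⌋₊, (n : ℝ)⁻¹ := by
    refine isBigO_principal.2 ⟨C, fun x (hx : 1 ≤ x) => ?_⟩
    have hNx : (⌊√x⌋₊ : ℝ) ≤ x :=
      (Nat.cast_le.2 (floor_sqrt_le_floor hx)).trans (Nat.floor_le (zero_le_one.trans hx))
    have hsub := Icc_subset_Icc_right (a := 1) (floor_sqrt_le_floor hx)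
    rw [Real.norm_eq_abs, Real.norm_of_nonneg (by positivity)]
    refine (abs_sum_Icc_comp_div_le hδ.le hC0 hC' hNx).trans ?_
    gcongr
  refine hhead.trans (((isBigO_div_floor_sqrt_rpow (-δ)).mul
    (hasLogPolyExpansion_sum_inv.isBigO_rpow (show 0 < δ / 4 by positivity))).congr' .rfl
    (Set.EqOn.eventuallyEq fun x (hx : 1 ≤ x) => ?_))
  rw [← Real.rpow_add (zero_lt_one.trans_le hx)]
  congr 1
  ring

theorem isBigO_sum_Ioc_floor_sqrt_sub_integral {f : ℝ → ℝ}
    (hmono : MonotoneOn (fun u => u * f u) (Set.Ici 1)) (hf1 : 0 ≤ f 1)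
    (hf : f =O[𝓟 (Set.Ici 1)] fun x : ℝ => x ^ (1 / 2 : ℝ)) :
    (fun x => ∑ n ∈ Ioc ⌊√x⌋₊ ⌊x⌋₊, f (x / n) / n - ∫ u in (1 : ℝ)..(x / ⌊√x⌋₊), f u / u)
      =O[𝓟 (Set.Ici 1)] fun x : ℝ => x ^ (-(1 / 4) : ℝ) := by
  have hbound : (fun x => ∑ n ∈ Ioc ⌊√x⌋₊ ⌊x⌋₊, f (x / n) / n -
      ∫ u in (1 : ℝ)..(x / ⌊√x⌋₊), f u / u) =O[𝓟 (Set.Ici 1)]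
      fun x : ℝ => f (x / ⌊√x⌋₊) * (x / ⌊√x⌋₊) ^ (1 : ℝ) * x⁻¹ := by
    refine isBigO_principal.2 ⟨1, fun x (hx : 1 ≤ x) => ?_⟩
    have hx0 : 0 < x := zero_lt_one.trans_le hx
    have hN : ⌊√x⌋₊ ≠ 0 := (Nat.floor_pos.2 (Real.one_le_sqrt.2 hx)).ne'
    have hNx : (⌊√x⌋₊ : ℝ) ≤ x :=
      (Nat.cast_le.2 (floor_sqrt_le_floor hx)).trans (Nat.floor_le hx0.le)
    have hval : f (x / ⌊√x⌋₊) * (x / ⌊√x⌋₊) ^ (1 : ℝ) * x⁻¹ = f (x / ⌊√x⌋₊) / ⌊√x⌋₊ := by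
      rw [Real.rpow_one]
      field_simp
    rw [hval, one_mul]
    exact (abs_sum_Ioc_comp_div_sub_integral_le hmono hf1 hN hNx).trans (le_abs_self _)
  refine hbound.trans ((((hf.comp_tendsto tendsto_div_floor_sqrt).trans
    (isBigO_div_floor_sqrt_rpow (1 / 2))).mul (isBigO_div_floor_sqrt_rpow 1)).mul
    (isBigO_refl (fun x : ℝ => x⁻¹) _) |>.congr' .rfl
    (Set.EqOn.eventuallyEq fun x (hx : 1 ≤ x) => ?_))
  have hx0 : 0 < x := zero_lt_one.trans_le hx
  rw [← Real.rpow_neg_one, ← Real.rpow_add hx0, ← Real.rpow_add hx0]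
  norm_num

theorem isBigO_integral_div_floor_sqrt_sub {e : ℝ → ℝ} {δ : ℝ} (hm : Measurable e) (hδ : 0 < δ)
    (he : e =O[𝓟 (Set.Ici 1)] fun x : ℝ => x ^ (-δ)) :
    (fun x => (∫ u in (1 : ℝ)..(x / ⌊√x⌋₊), e u / u) - ∫ u in Set.Ioi 1, e u / u)
      =O[𝓟 (Set.Ici 1)] fun x : ℝ => x ^ (-(δ / 2)) := by
  have h := isBigO_intervalIntegral_sub_integral_Ioi_rpow (hm.div measurable_id)
    (show -δ - 1 < -1 by linarith) (isBigO_div_self_rpow he)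
  refine (h.comp_tendsto tendsto_div_floor_sqrt).trans ?_
  simpa only [Function.comp_def, sub_add_cancel, neg_div] using isBigO_div_floor_sqrt_rpow (-δ)

theorem exists_hasLogPolyExpansion_harmonicConv_of_isBigO {e : ℝ → ℝ} {δ : ℝ} (hm : Measurable e)
    (hδ : 0 < δ) (he : e =O[𝓟 (Set.Ici 1)] fun x : ℝ => x ^ (-δ))
    (htail : (fun x => ∑ n ∈ Ioc ⌊√x⌋₊ ⌊x⌋₊, e (x / n) / n -
      ∫ u in (1 : ℝ)..(x / ⌊√x⌋₊), e u / u) =O[𝓟 (Set.Ici 1)] fun x : ℝ => x ^ (-(1 / 4) : ℝ)) :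
    ∃ Q, HasLogPolyExpansion (harmonicConv e) Q := by
  refine ⟨Polynomial.C (∫ u in Set.Ioi 1, e u / u), min (δ / 4) (1 / 4), by positivity, ?_⟩
  have hhead := (isBigO_sum_Icc_floor_sqrt_comp_div hδ he).trans
    (isBigO_rpow_rpow_of_le (neg_le_neg (min_le_left (δ / 4) (1 / 4))))
  have htail' := htail.trans
    (isBigO_rpow_rpow_of_le (neg_le_neg (min_le_right (δ / 4) (1 / 4))))
  have hinteg := (isBigO_integral_div_floor_sqrt_sub hm hδ he).trans
    (isBigO_rpow_rpow_of_le (b := -min (δ / 4) (1 / 4))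
      (neg_le_neg ((min_le_left _ _).trans (by linarith))))
  refine ((hhead.add htail').add hinteg).congr'
    (Set.EqOn.eventuallyEq fun x (hx : 1 ≤ x) => ?_) .rfl
  have hsplit : harmonicConv e x =
      ∑ n ∈ Icc 1 ⌊√x⌋₊, e (x / n) / n + ∑ n ∈ Ioc ⌊√x⌋₊ ⌊x⌋₊, e (x / n) / n := by
    have hIcc (m : ℕ) : Icc 1 m = Ioc 0 m := rfl
    rw [harmonicConv, hIcc, hIcc,
      sum_Ioc_consecutive (fun n : ℕ => e (x / n) / n) (Nat.zero_le _) (floor_sqrt_le_floor hx)]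
  rw [hsplit, Polynomial.eval_C]
  ring

theorem isBigO_sum_Ioc_floor_sqrt_eval_log_sub_integral (Q : Polynomial ℝ) :
    (fun x => ∑ n ∈ Ioc ⌊√x⌋₊ ⌊x⌋₊, Q.eval (Real.log (x / n)) / n -
      ∫ u in (1 : ℝ)..(x / ⌊√x⌋₊), Q.eval (Real.log u) / u)
      =O[𝓟 (Set.Ici 1)] fun x : ℝ => x ^ (-(1 / 4) : ℝ) := by
  induction Q using Polynomial.induction_on' with
  | add P Q hP hQ =>
    refine (hP.add hQ).congr' (Set.EqOn.eventuallyEq fun x hx => ?_) .rfl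
    have hy : 1 ≤ x / ⌊√x⌋₊ := (Real.one_le_sqrt.2 hx).trans (sqrt_le_div_floor_sqrt hx)
    simp only [Polynomial.eval_add, add_div, sum_add_distrib]
    rw [intervalIntegral.integral_add (intervalIntegrable_eval_log_div P hy)
      (intervalIntegrable_eval_log_div Q hy)]
    ring
  | monomial j a =>
    have hmono : MonotoneOn (fun u => u * Real.log u ^ j) (Set.Ici 1) := by
      intro u (hu : 1 ≤ u) v (hv : 1 ≤ v) huv
      have := Real.log_nonneg hu
      dsimp only
      gcongr
    have hone : 0 ≤ Real.log 1 ^ j := pow_nonneg (Real.log_nonneg le_rfl) j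
    refine ((isBigO_sum_Ioc_floor_sqrt_sub_integral hmono hone
      (isBigO_log_pow_rpow j one_half_pos)).const_mul_left a).congr_left fun x => ?_
    simp only [Polynomial.eval_monomial, mul_div_assoc, ← mul_sum,
      intervalIntegral.integral_const_mul, mul_sub]

theorem HasLogPolyExpansion.exists_harmonicConv {f : ℝ → ℝ} {Q : Polynomial ℝ} (hm : Measurable f)
    (hmono : MonotoneOn (fun u => u * f u) (Set.Ici 1)) (hf1 : 0 ≤ f 1)
    (hf : HasLogPolyExpansion f Q) : ∃ R, HasLogPolyExpansion (harmonicConv f) R := by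
  have htail := (isBigO_sum_Ioc_floor_sqrt_sub_integral hmono hf1 (hf.isBigO_rpow one_half_pos)).sub
    (isBigO_sum_Ioc_floor_sqrt_eval_log_sub_integral Q)
  obtain ⟨δ, hδ, he⟩ := hf
  obtain ⟨R, hR⟩ := exists_hasLogPolyExpansion_harmonicConv_of_isBigO (by fun_prop) hδ he
    (htail.congr' (Set.EqOn.eventuallyEq fun x (hx : 1 ≤ x) => by
      have hy : 1 ≤ x / ⌊√x⌋₊ := (Real.one_le_sqrt.2 hx).trans (sqrt_le_div_floor_sqrt hx)
      simp only [sub_div, sum_sub_distrib]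
      rw [intervalIntegral.integral_sub (intervalIntegrable_div_of_monotoneOn_mul hmono hy)
        (intervalIntegrable_eval_log_div Q hy)]
      ring) .rfl)
  obtain ⟨S, hS⟩ := exists_hasLogPolyExpansion_harmonicConv_eval_log Q
  refine ⟨R + S, (hR.add hS).congr fun x _ => ?_⟩
  simp only [← harmonicConv_add, sub_add_cancel]

/-! ### The summatory function of `d_k` -/

/-- The summatory function `D_k(x) = ∑_{n ≤ x} d_k(n)`. -/
noncomputable def dkSum (k : ℕ) (x : ℝ) : ℝ := ∑ n ∈ Icc 1 ⌊x⌋₊, (dk k n : ℝ)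

theorem monotone_dkSum (k : ℕ) : Monotone (dkSum k) := fun _ _ hxy =>
  sum_le_sum_of_subset_of_nonneg (Icc_subset_Icc_right (Nat.floor_mono hxy)) fun _ _ _ =>
    Nat.cast_nonneg _

theorem dkSum_nonneg (k : ℕ) (x : ℝ) : 0 ≤ dkSum k x := sum_nonneg fun _ _ => Nat.cast_nonneg _

theorem measurable_dkSum_div (k : ℕ) : Measurable fun x => dkSum k x / x :=
  (monotone_dkSum k).measurable.div measurable_id

theorem dkSum_zero {x : ℝ} (hx : 1 ≤ x) : dkSum 0 x = 1 := by
  have h1 : 1 ∈ Icc 1 ⌊x⌋₊ := mem_Icc.2 ⟨le_rfl, (Nat.one_le_floor_iff x).2 hx⟩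
  simp only [dkSum, dk, pow_zero, ArithmeticFunction.one_apply, Nat.cast_ite, Nat.cast_one,
    Nat.cast_zero, sum_ite_eq', h1, if_true]

theorem dkSum_succ (k : ℕ) (x : ℝ) : dkSum (k + 1) x = ∑ n ∈ Icc 1 ⌊x⌋₊, dkSum k (x / n) := by
  have hIcc (m : ℕ) : Icc 1 m = Ioc 0 m := rfl
  have h := ArithmeticFunction.sum_Ioc_mul_eq_sum_sum ArithmeticFunction.zeta
    (ArithmeticFunction.zeta ^ k) ⌊x⌋₊
  rw [← pow_succ'] at h
  simp only [dkSum, dk, Nat.floor_div_natCast, hIcc, ← Nat.cast_sum]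
  rw [h]
  congr 1
  refine sum_congr rfl fun n hn => ?_
  rw [ArithmeticFunction.zeta_apply_ne (mem_Ioc.1 hn).1.ne', one_mul]

theorem dkSum_succ_div (k : ℕ) (x : ℝ) :
    dkSum (k + 1) x / x = harmonicConv (fun y => dkSum k y / y) x := by
  rw [dkSum_succ, sum_div]
  refine sum_congr rfl fun n hn => ?_
  have hn0 : (n : ℝ) ≠ 0 := Nat.cast_ne_zero.2 (Nat.one_le_iff_ne_zero.1 (mem_Icc.1 hn).1)
  rw [div_div, div_mul_cancel₀ x hn0]

theorem exists_hasLogPolyExpansion_dkSum_div (k : ℕ) :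
    ∃ Q, HasLogPolyExpansion (fun x => dkSum k x / x) Q := by
  induction k with
  | zero =>
    refine ⟨0, 1, one_pos, (isBigO_refl _ _).congr' (Set.EqOn.eventuallyEq fun x hx => ?_) .rfl⟩
    dsimp only
    rw [dkSum_zero hx, Polynomial.eval_zero, sub_zero, Real.rpow_neg_one, one_div]
  | succ k ih =>
    obtain ⟨Q, hQ⟩ := ih
    have hmul : Set.EqOn (fun u => u * (dkSum k u / u)) (dkSum k) (Set.Ici 1) := fun u hu =>
      mul_div_cancel₀ _ (one_pos.trans_le hu).ne'
    simp only [dkSum_succ_div]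
    exact hQ.exists_harmonicConv (measurable_dkSum_div k)
      (((monotone_dkSum k).monotoneOn _).congr hmul.symm)
      (div_nonneg (dkSum_nonneg k 1) zero_le_one)

/-! ### Laplace transforms of logarithmic-polynomial expansions -/

theorem integrableOn_log_rpow_mul_rpow {a u : ℝ} (ha : -1 < a) (hu : 0 < u) :
    IntegrableOn (fun t => Real.log t ^ a * t ^ (-(1 + u))) (Set.Ioi 1) := by
  have h := integrableOn_rpow_mul_exp_neg_mul_rpow ha one_pos hu
  rw [← Real.log_one, ← integrableOn_comp_log_Ioi _ one_pos] at h
  refine h.congr_fun (fun t ht => ?_) measurableSet_Ioi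
  have ht0 : 0 < t := one_pos.trans ht
  simp only [Real.rpow_one, smul_eq_mul]
  rw [neg_add, Real.rpow_add ht0, Real.rpow_neg_one, Real.rpow_def_of_pos ht0,
    mul_comm (Real.log t) (-u)]
  ring

theorem integral_log_pow_mul_rpow (j : ℕ) {u : ℝ} (hu : 0 < u) :
    ∫ t in Set.Ioi (1 : ℝ), Real.log t ^ j * t ^ (-(1 + u)) =
      Nat.factorial j * u⁻¹ ^ (j + 1) := by
  have h := Real.integral_rpow_mul_exp_neg_mul_Ioi (a := j + 1) (by positivity) hu
  rw [← Real.log_one, ← integral_comp_log_Ioi _ one_pos, Real.Gamma_nat_eq_factorial] at h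
  rw [mul_comm, ← one_div, ← Real.rpow_natCast (1 / u) (j + 1), Nat.cast_add_one, ← h]
  refine setIntegral_congr_fun measurableSet_Ioi fun t ht => ?_
  have ht0 : 0 < t := one_pos.trans ht
  simp only [smul_eq_mul, add_sub_cancel_right, Real.rpow_natCast]
  rw [neg_add, Real.rpow_add ht0, Real.rpow_neg_one, Real.rpow_def_of_pos ht0 (-u),
    mul_neg, mul_comm (Real.log t) u]
  ring

/-- The linear map `X ^ j ↦ j! X ^ (j + 1)`. It sends `Q` to the polynomial whose value at `u⁻¹`
is the Laplace transform `∫_1^∞ Q(log t) t ^ (-(1 + u)) dt`. -/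
noncomputable def laplacePoly : Polynomial ℝ →ₗ[ℝ] Polynomial ℝ :=
  Polynomial.lsum fun j => (Nat.factorial j : ℝ) • Polynomial.monomial (j + 1)

theorem laplacePoly_monomial (j : ℕ) (a : ℝ) :
    laplacePoly (Polynomial.monomial j a) = Polynomial.monomial (j + 1) (Nat.factorial j * a) := by
  rw [laplacePoly, Polynomial.lsum_apply, Polynomial.sum_monomial_index _ _ (LinearMap.map_zero _),
    LinearMap.smul_apply, Polynomial.smul_monomial, smul_eq_mul]

theorem coeff_laplacePoly_succ (Q : Polynomial ℝ) (j : ℕ) :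
    (laplacePoly Q).coeff (j + 1) = Nat.factorial j * Q.coeff j := by
  induction Q using Polynomial.induction_on' with
  | add P Q hP hQ => rw [map_add, Polynomial.coeff_add, Polynomial.coeff_add, hP, hQ, mul_add]
  | monomial n a =>
    rw [laplacePoly_monomial, Polynomial.coeff_monomial, Polynomial.coeff_monomial]
    by_cases h : n = j <;> simp [h]

theorem integrableOn_eval_log_mul_rpow (Q : Polynomial ℝ) {u : ℝ} (hu : 0 < u) :
    IntegrableOn (fun t => Q.eval (Real.log t) * t ^ (-(1 + u))) (Set.Ioi 1) := by
  simp only [Polynomial.eval_eq_sum_range, sum_mul, mul_assoc]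
  refine integrable_finsetSum _ fun j _ => Integrable.const_mul ?_ _
  simpa only [Real.rpow_natCast, IntegrableOn] using
    integrableOn_log_rpow_mul_rpow (a := j) (neg_one_lt_zero.trans_le j.cast_nonneg) hu

theorem integral_eval_log_mul_rpow (Q : Polynomial ℝ) {u : ℝ} (hu : 0 < u) :
    ∫ t in Set.Ioi (1 : ℝ), Q.eval (Real.log t) * t ^ (-(1 + u)) = (laplacePoly Q).eval u⁻¹ := by
  induction Q using Polynomial.induction_on' with
  | add P Q hP hQ =>
    simp only [Polynomial.eval_add, add_mul, map_add]
    rw [integral_add (integrableOn_eval_log_mul_rpow P hu) (integrableOn_eval_log_mul_rpow Q hu),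
      hP, hQ]
  | monomial n a =>
    simp only [Polynomial.eval_monomial, mul_assoc, laplacePoly_monomial]
    rw [integral_const_mul, integral_log_pow_mul_rpow n hu, mul_left_comm]

theorem HasLogPolyExpansion.isBigO_laplace_sub {f : ℝ → ℝ} {Q : Polynomial ℝ}
    (hm : Measurable f) (hf : HasLogPolyExpansion f Q) :
    (fun u : ℝ => (∫ t in Set.Ioi (1 : ℝ), f t * t ^ (-(1 + u))) - (laplacePoly Q).eval u⁻¹)
      =O[𝓟 (Set.Ioi 0)] fun _ => (1 : ℝ) := by
  obtain ⟨δ, hδ, h⟩ := hf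
  set e : ℝ → ℝ := fun t => (f t - Q.eval (Real.log t)) / t
  have hme : Measurable e := by fun_prop
  have he : IntegrableOn e (Set.Ioi 1) :=
    integrableOn_Ioi_one_of_isBigO_rpow hme (by linarith) (isBigO_div_self_rpow h)
  refine isBigO_principal.2 ⟨∫ t in Set.Ioi 1, ‖e t‖, fun u (hu : 0 < u) => ?_⟩
  have hsplit {t : ℝ} (ht : t ∈ Set.Ioi 1) :
      f t * t ^ (-(1 + u)) = e t * t ^ (-u) + Q.eval (Real.log t) * t ^ (-(1 + u)) := by
    have ht0 : 0 < t := one_pos.trans ht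
    rw [neg_add, Real.rpow_add ht0, Real.rpow_neg_one]
    ring
  have hle : ∀ᵐ t ∂volume.restrict (Set.Ioi (1 : ℝ)), ‖e t * t ^ (-u)‖ ≤ ‖e t‖ := by
    refine (ae_restrict_iff' measurableSet_Ioi).2 (.of_forall fun t ht => ?_)
    have ht0 : 0 < t := one_pos.trans ht
    rw [norm_mul, Real.norm_of_nonneg (Real.rpow_nonneg ht0.le _)]
    exact mul_le_of_le_one_right (norm_nonneg _)
      (Real.rpow_le_one_of_one_le_of_nonpos ht.le (neg_nonpos.2 hu.le))
  have hinteg : IntegrableOn (fun t => e t * t ^ (-u)) (Set.Ioi 1) :=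
    he.norm.mono' (hme.mul (measurable_id.pow_const _)).aestronglyMeasurable hle
  rw [setIntegral_congr_fun measurableSet_Ioi fun t => hsplit,
    integral_add hinteg (integrableOn_eval_log_mul_rpow Q hu), integral_eval_log_mul_rpow Q hu,
    add_sub_cancel_right, norm_one, mul_one]
  exact norm_integral_le_of_norm_le he.norm hle

theorem eq_zero_of_isBigO_eval_laplacePoly_inv {Q : Polynomial ℝ}
    (hQ : (fun u => (laplacePoly Q).eval u⁻¹) =O[𝓝[>] 0] fun _ => (1 : ℝ)) : Q = 0 := by
  have hbdd : (fun v => (laplacePoly Q).eval v) =O[atTop] fun _ => (1 : ℝ) := by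
    simpa only [Function.comp_def, inv_inv] using hQ.comp_tendsto tendsto_inv_atTop_nhdsGT_zero
  have hdeg : (laplacePoly Q).degree ≤ 0 := by
    rw [← Polynomial.isBoundedUnder_abs_atTop_iff]
    exact isBigO_one_iff ℝ |>.1 hbdd
  ext j
  have hcoeff := coeff_laplacePoly_succ Q j
  rw [Polynomial.coeff_eq_zero_of_degree_lt (hdeg.trans_lt (mod_cast j.succ_pos))] at hcoeff
  exact (mul_eq_zero.1 hcoeff.symm).resolve_left (mod_cast j.factorial_ne_zero)

/-! ### Identification of the main term -/

theorem LSeriesHasSum_dk (k : ℕ) {s : ℂ} (hs : 1 < s.re) :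
    LSeriesHasSum (fun n => (dk k n : ℂ)) s (riemannZeta s ^ k) := by
  induction k with
  | zero =>
    have hdelta : (fun n => (dk 0 n : ℂ)) = LSeries.delta := by
      rw [← ArithmeticFunction.one_eq_delta]
      ext n
      simp only [dk, pow_zero, ArithmeticFunction.one_apply]
      split_ifs <;> simp
    rw [hdelta, pow_zero, LSeriesHasSum, funext (LSeries.term_delta s)]
    exact hasSum_ite_eq (1 : ℕ) (1 : ℂ)
  | succ k ih =>
    have h := ArithmeticFunction.LSeriesHasSum_mul
      (f := ((ArithmeticFunction.zeta ^ k : ArithmeticFunction ℕ) : ArithmeticFunction ℂ))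
      (g := ((ArithmeticFunction.zeta : ArithmeticFunction ℕ) : ArithmeticFunction ℂ)) ih
      (ArithmeticFunction.LSeriesHasSum_zeta hs)
    rw [← ArithmeticFunction.natCoe_mul, ← pow_succ] at h
    rw [pow_succ]
    exact h

theorem isBigO_sum_dk_rpow (k : ℕ) {ε : ℝ} (hε : 0 < ε) :
    (fun n : ℕ => ∑ i ∈ Icc 1 n, (dk k i : ℝ)) =O[atTop] fun n : ℕ => (n : ℝ) ^ (1 + ε) := by
  obtain ⟨Q, hQ⟩ := exists_hasLogPolyExpansion_dkSum_div k
  have hcast : Tendsto (fun n : ℕ => (n : ℝ)) atTop (𝓟 (Set.Ici 1)) :=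
    tendsto_principal.2 ((eventually_ge_atTop 1).mono fun _ hn => Set.mem_Ici.2 (mod_cast hn))
  refine (((hQ.isBigO_rpow hε).comp_tendsto hcast).mul
    (isBigO_refl (fun n : ℕ => (n : ℝ)) atTop)).congr' ?_ ?_ <;>
  filter_upwards [eventually_ne_atTop 0] with n hn
  · have hn' : (n : ℝ) ≠ 0 := Nat.cast_ne_zero.2 hn
    rw [Function.comp_apply, div_mul_cancel₀ _ hn', dkSum, Nat.floor_natCast]
  · rw [Function.comp_apply, add_comm 1, Real.rpow_add_one (Nat.cast_ne_zero.2 hn)]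

theorem riemannZeta_pow_eq_integral (k : ℕ) {u : ℝ} (hu : 0 < u) :
    riemannZeta (1 + u) ^ k =
      (((1 + u) * ∫ t in Set.Ioi (1 : ℝ), dkSum k t / t * t ^ (-(1 + u)) : ℝ) : ℂ) := by
  have hre : (1 + u : ℂ).re = 1 + u := by simp
  have hL := LSeries_eq_mul_integral_of_nonneg (fun n => (dk k n : ℝ)) (r := 1 + u / 2)
    (by positivity) (s := 1 + u) (by linarith) (isBigO_sum_dk_rpow k (half_pos hu))
    fun n => Nat.cast_nonneg _
  simp only [Complex.ofReal_natCast] at hL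
  rw [← (LSeriesHasSum_dk k (by linarith)).LSeries_eq, hL, Complex.ofReal_mul,
    ← integral_complex_ofReal, Complex.ofReal_add, Complex.ofReal_one]
  congr 1
  refine setIntegral_congr_fun measurableSet_Ioi fun t ht => ?_
  have ht0 : 0 < t := one_pos.trans ht
  have hcpow : (t : ℂ) ^ (-((1 : ℂ) + u + 1)) = ((t ^ (-(1 + u + 1)) : ℝ) : ℂ) := by
    rw [Complex.ofReal_cpow ht0.le]
    push_cast
    rfl
  have hrpow : t ^ (-(1 + u + 1)) = t ^ (-(1 + u)) / t := by
    rw [neg_add (1 + u), Real.rpow_add ht0, Real.rpow_neg_one, div_eq_mul_inv]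
  rw [hcpow, hrpow, dkSum]
  push_cast
  ring

theorem re_zetaPowAux_one_add (k : ℕ) {u : ℝ} (hu : 0 < u) :
    (zetaPowAux k (1 + u)).re =
      u ^ k * ((1 + u) * ∫ t in Set.Ioi (1 : ℝ), dkSum k t / t * t ^ (-(1 + u))) := by
  have hne : (1 + u : ℂ) ≠ 1 := by simpa using hu.ne'
  rw [zetaPowAux, Function.update_of_ne hne, mul_pow, riemannZeta_pow_eq_integral _ hu,
    add_sub_cancel_left, ← Complex.ofReal_pow, ← Complex.ofReal_mul, Complex.ofReal_re]

theorem analyticAt_zetaPowAux (k : ℕ) : AnalyticAt ℂ (zetaPowAux k) 1 := by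
  have hpow : zetaPowAux k = fun s =>
      (Function.update (fun s : ℂ => (s - 1) * riemannZeta s) 1 1 s) ^ k := by
    funext s
    by_cases hs : s = 1 <;> simp [zetaPowAux, hs]
  rw [hpow]
  refine AnalyticAt.pow (analyticAt_of_differentiable_on_punctured_nhds_of_continuousAt ?_ ?_) k
  · filter_upwards [self_mem_nhdsWithin] with s hs
    have hd : DifferentiableAt ℂ (fun s : ℂ => (s - 1) * riemannZeta s) s :=
      (differentiableAt_id.sub_const 1).mul (differentiableAt_riemannZeta hs)
    refine hd.congr_of_eventuallyEq ?_
    filter_upwards [isOpen_ne.mem_nhds hs] with z hz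
    exact Function.update_of_ne hz _ _
  · simpa only [continuousAt_update_same] using riemannZeta_residue_one

theorem isBigO_re_zetaPowAux_sub_taylor (k : ℕ) :
    (fun u : ℝ => (zetaPowAux k (1 + u)).re - ∑ i ∈ range k, lam k i / Nat.factorial i * u ^ i)
      =O[𝓝[>] 0] fun u => u ^ k := by
  have hofReal : Tendsto (fun u : ℝ => (u : ℂ)) (𝓝[>] 0) (𝓝 0) :=
    (Complex.continuous_ofReal.tendsto' 0 0 Complex.ofReal_zero).mono_left nhdsWithin_le_nhds
  have htaylor := ((analyticAt_zetaPowAux k).hasFPowerSeriesAt.isBigO_sub_partialSum_pow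
    k).comp_tendsto hofReal
  have hpow : ((fun y : ℂ => ‖y‖ ^ k) ∘ fun u : ℝ => (u : ℂ)) =O[𝓝[>] 0] fun u : ℝ => u ^ k :=
    .of_bound' (.of_forall fun u => by simp)
  refine (IsBigO.of_bound' (.of_forall fun u => ?_)).trans (htaylor.trans hpow)
  refine (Complex.abs_re_le_norm _).trans_eq' ?_
  simp only [Function.comp_apply, Complex.sub_re, FormalMultilinearSeries.partialSum,
    Complex.re_sum, FormalMultilinearSeries.ofScalars_apply_eq, smul_eq_mul,
    ← Complex.ofReal_pow, Complex.re_mul_ofReal, Complex.div_natCast_re, lam, Real.norm_eq_abs]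

theorem one_add_mul_sum_alternating {R : Type*} [CommRing R] (c : ℕ → R) (u : R) (k : ℕ) :
    (1 + u) * ∑ m ∈ range k, ((-1) ^ m * ∑ i ∈ range (m + 1), (-1) ^ i * c i) * u ^ m =
      ∑ i ∈ range k, c i * u ^ i - (-1) ^ k * (∑ i ∈ range k, (-1) ^ i * c i) * u ^ k := by
  induction k with
  | zero => simp
  | succ k ih =>
    have hsq : (-1 : R) ^ k * (-1) ^ k = 1 := by rw [← mul_pow, neg_one_mul, neg_neg, one_pow]
    simp only [sum_range_succ _ k, mul_add, ih]
    linear_combination c k * u ^ k * hsq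

/-- The polynomial `P_k`, so that `x P_k(log x)` is the main term of `D_k(x)`. -/
noncomputable def piltzPoly (k : ℕ) : Polynomial ℝ :=
  ∑ j ∈ range k, Polynomial.monomial j (aCoef k j / Nat.factorial j)

theorem pow_mul_eval_laplacePoly_piltzPoly (k : ℕ) {u : ℝ} (hu : u ≠ 0) :
    u ^ k * (laplacePoly (piltzPoly k)).eval u⁻¹ = ∑ m ∈ range k,
      ((-1) ^ m * ∑ i ∈ range (m + 1), (-1) ^ i * (lam k i / Nat.factorial i)) * u ^ m := by
  rw [← sum_range_reflect]
  simp only [piltzPoly, map_sum, laplacePoly_monomial, Polynomial.eval_finsetSum,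
    Polynomial.eval_monomial, mul_sum (a := u ^ k)]
  refine sum_congr rfl fun j hj => ?_
  have hpow : u ^ k = u ^ (k - 1 - j) * u ^ (j + 1) := by
    rw [← pow_add]
    congr 1
    have := mem_range.1 hj
    lia
  have hfact : (Nat.factorial j : ℝ) ≠ 0 := mod_cast j.factorial_ne_zero
  rw [hpow, mul_div_cancel₀ _ hfact, inv_pow, aCoef]
  field_simp

theorem isBigO_laplace_dkSum_div_sub_piltzPoly (k : ℕ) :
    (fun u : ℝ => (∫ t in Set.Ioi (1 : ℝ), dkSum k t / t * t ^ (-(1 + u))) -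
      (laplacePoly (piltzPoly k)).eval u⁻¹) =O[𝓝[>] 0] fun _ => (1 : ℝ) := by
  have hpos : ∀ᶠ u : ℝ in 𝓝[>] 0, 0 < u := self_mem_nhdsWithin
  set c : ℕ → ℝ := fun i => lam k i / Nat.factorial i
  set a : ℝ := (-1) ^ k * ∑ i ∈ range k, (-1) ^ i * c i
  have hremainder := (isBigO_re_zetaPowAux_sub_taylor k).add
    ((isBigO_refl (fun u : ℝ => u ^ k) _).const_mul_left a)
  have hcancel := (isBigO_refl (fun u : ℝ => (u ^ k)⁻¹) (𝓝[>] 0)).mul hremainder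
  refine (IsBigO.of_bound' ?_).trans (hcancel.congr' .rfl
    (hpos.mono fun u hu => inv_mul_cancel₀ (pow_pos hu k).ne'))
  filter_upwards [hpos] with u hu
  have halt := one_add_mul_sum_alternating c u k
  rw [← pow_mul_eval_laplacePoly_piltzPoly k hu.ne'] at halt
  set I := ∫ t in Set.Ioi (1 : ℝ), dkSum k t / t * t ^ (-(1 + u))
  set L := (laplacePoly (piltzPoly k)).eval u⁻¹
  have hval : (u ^ k)⁻¹ * ((zetaPowAux k (1 + u)).re - ∑ i ∈ range k, c i * u ^ i + a * u ^ k) =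
      (1 + u) * (I - L) := by
    rw [re_zetaPowAux_one_add k hu, inv_mul_eq_iff_eq_mul₀ (pow_pos hu k).ne']
    linear_combination halt
  rw [hval, norm_mul]
  refine le_mul_of_one_le_left (norm_nonneg _) ?_
  rw [Real.norm_of_nonneg (by positivity)]
  linarith

theorem hasLogPolyExpansion_dkSum_div (k : ℕ) :
    HasLogPolyExpansion (fun x => dkSum k x / x) (piltzPoly k) := by
  obtain ⟨Q, hQ⟩ := exists_hasLogPolyExpansion_dkSum_div k
  have hdiff := (isBigO_laplace_dkSum_div_sub_piltzPoly k).sub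
    ((hQ.isBigO_laplace_sub (measurable_dkSum_div k)).mono inf_le_right)
  have hzero : Q - piltzPoly k = 0 := by
    refine eq_zero_of_isBigO_eval_laplacePoly_inv (hdiff.congr_left fun u => ?_)
    rw [map_sub, Polynomial.eval_sub]
    ring
  rwa [← sub_eq_zero.1 hzero]

theorem measurable_deltak (k : ℕ) : Measurable (Deltak k) :=
  (monotone_dkSum k).measurable.sub (by fun_prop)

theorem exists_isBigO_deltak_div_sq (k : ℕ) :
    ∃ δ : ℝ, 0 < δ ∧
      (fun r => Deltak k r / r ^ 2) =O[𝓟 (Set.Ici 1)] fun r : ℝ => r ^ (-(1 + δ)) := by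
  obtain ⟨δ, hδ, h⟩ := hasLogPolyExpansion_dkSum_div k
  refine ⟨δ, hδ, (isBigO_div_self_rpow h).congr' (Set.EqOn.eventuallyEq fun r hr => ?_)
    (.of_eq (funext fun r => ?_))⟩
  · have hr0 : r ≠ 0 := (one_pos.trans_le hr).ne'
    simp only [Deltak, dkSum, piltzPoly, Polynomial.eval_finsetSum, Polynomial.eval_monomial]
    field_simp
  · rw [neg_add, add_comm, sub_eq_add_neg]

/-! ### Bessel functions -/

/-- The Bessel–Clifford function `C_n(t) = ∑ t^m / (m! (m + n)!)`. It carries the power series of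
the Bessel functions through `J_n(u) = (u / 2)^n C_n(-(u / 2)^2)`. -/
noncomputable def besselClifford (n : ℕ) (t : ℝ) : ℝ :=
  ∑' m : ℕ, t ^ m / ((m.factorial : ℝ) * (m + n).factorial)

theorem norm_pow_div_factorial_mul_factorial_le {t R : ℝ} (ht : |t| ≤ R) (m n : ℕ) :
    ‖t ^ m / ((m.factorial : ℝ) * n.factorial)‖ ≤ R ^ m / m.factorial := by
  have hn : (1 : ℝ) ≤ n.factorial := mod_cast n.factorial_pos
  have hmn : (0 : ℝ) ≤ m.factorial * n.factorial := by positivity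
  rw [norm_div, norm_pow, Real.norm_eq_abs, Real.norm_of_nonneg hmn]
  gcongr
  · exact pow_nonneg ((abs_nonneg t).trans ht) m
  · exact le_mul_of_one_le_right (by positivity) hn

theorem summable_besselClifford (n : ℕ) (t : ℝ) :
    Summable fun m : ℕ => t ^ m / ((m.factorial : ℝ) * (m + n).factorial) :=
  .of_norm_bounded (Real.summable_pow_div_factorial |t|) fun m =>
    norm_pow_div_factorial_mul_factorial_le le_rfl m (m + n)

theorem besselClifford_apply_zero (n : ℕ) : besselClifford n 0 = 1 / n.factorial := by
  rw [besselClifford, tsum_eq_single 0 fun m hm => by simp [hm]]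
  simp

theorem besselClifford_eq_add_tsum (n : ℕ) (t : ℝ) :
    besselClifford n t = 1 / n.factorial +
      ∑' m : ℕ, t ^ (m + 1) / (((m + 1).factorial : ℝ) * (m + 1 + n).factorial) := by
  rw [besselClifford, (summable_besselClifford n t).tsum_eq_zero_add]
  simp

theorem hasDerivAt_besselClifford (n : ℕ) (t : ℝ) :
    HasDerivAt (besselClifford n) (besselClifford (n + 1) t) t := by
  set R := |t| + 1
  have hterm (m : ℕ) (y : ℝ) : HasDerivAt
      (fun y : ℝ => y ^ (m + 1) / (((m + 1).factorial : ℝ) * (m + 1 + n).factorial))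
      (y ^ m / ((m.factorial : ℝ) * (m + (n + 1)).factorial)) y := by
    refine ((hasDerivAt_pow (m + 1) y).div_const _).congr_deriv ?_
    rw [Nat.factorial_succ, show m + 1 + n = m + (n + 1) by ring, Nat.add_sub_cancel]
    push_cast
    field_simp
  rw [funext (besselClifford_eq_add_tsum n)]
  refine HasDerivAt.const_add _ ?_
  exact hasDerivAt_tsum_of_isPreconnected (Real.summable_pow_div_factorial R)
    Metric.isOpen_ball (convex_ball (0 : ℝ) R).isPreconnected (fun m y _ => hterm m y)
    (fun m y hy => norm_pow_div_factorial_mul_factorial_le (mem_ball_zero_iff.1 hy).le m _)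
    (Metric.mem_ball_self (by positivity)) (by simp) (by simp [R])

theorem continuous_besselClifford (n : ℕ) : Continuous (besselClifford n) :=
  continuous_iff_continuousAt.2 fun t => (hasDerivAt_besselClifford n t).continuousAt

theorem besselClifford_recurrence (n : ℕ) (t : ℝ) :
    besselClifford n t = (n + 1) * besselClifford (n + 1) t + t * besselClifford (n + 2) t := by
  have hshift : HasSum (fun m : ℕ => m * (t ^ m / ((m.factorial : ℝ) * (m + (n + 1)).factorial)))
      (t * besselClifford (n + 2) t) := by
    rw [← hasSum_nat_add_iff' 1]
    simp only [range_one, sum_singleton, Nat.cast_zero, zero_mul, sub_zero]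
    refine ((summable_besselClifford (n + 2) t).hasSum.mul_left t).congr_fun fun m => ?_
    rw [Nat.factorial_succ, show m + 1 + (n + 1) = m + (n + 2) by ring]
    push_cast
    field_simp
    ring
  refine (summable_besselClifford n t).hasSum.unique
    ((((summable_besselClifford (n + 1) t).hasSum.mul_left ((n : ℝ) + 1)).add hshift).congr_fun
      fun m => ?_)
  rw [← add_assoc m n 1, Nat.factorial_succ]
  push_cast
  field_simp
  ring

/-- The Bessel function of the first kind of order `1`, needed because `J₀' = -J₁`. -/
noncomputable def besselJ1 (u : ℝ) : ℝ := u / 2 * besselClifford 1 (-(u / 2) ^ 2)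

theorem besselJ0_eq_besselClifford (u : ℝ) : besselJ0 u = besselClifford 0 (-(u / 2) ^ 2) := by
  refine tsum_congr fun m => ?_
  rw [neg_pow ((u / 2) ^ 2), ← pow_mul, add_zero, sq]

theorem hasDerivAt_besselClifford_neg_sq (n : ℕ) (u : ℝ) :
    HasDerivAt (fun u => besselClifford n (-(u / 2) ^ 2))
      (-(u / 2) * besselClifford (n + 1) (-(u / 2) ^ 2)) u := by
  have hsq : HasDerivAt (fun u : ℝ => -(u / 2) ^ 2) (-(u / 2)) u := by
    refine (((hasDerivAt_id' u).div_const 2).pow 2).neg.congr_deriv ?_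
    ring
  rw [mul_comm]
  exact (hasDerivAt_besselClifford n _).comp u hsq

theorem hasDerivAt_besselJ0 (u : ℝ) : HasDerivAt besselJ0 (-besselJ1 u) u := by
  rw [funext besselJ0_eq_besselClifford, besselJ1, ← neg_mul]
  exact hasDerivAt_besselClifford_neg_sq 0 u

theorem hasDerivAt_besselJ1 {u : ℝ} (hu : u ≠ 0) :
    HasDerivAt besselJ1 (besselJ0 u - besselJ1 u / u) u := by
  refine (((hasDerivAt_id' u).div_const 2).mul
    (hasDerivAt_besselClifford_neg_sq 1 u)).congr_deriv ?_
  have hrec := besselClifford_recurrence 0 (-(u / 2) ^ 2)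
  rw [besselJ0_eq_besselClifford, besselJ1, hrec]
  push_cast
  field_simp
  ring

theorem continuous_besselJ0 : Continuous besselJ0 :=
  continuous_iff_continuousAt.2 fun u => (hasDerivAt_besselJ0 u).continuousAt

theorem continuous_besselJ1 : Continuous besselJ1 :=
  (continuous_id.div_const 2).mul ((continuous_besselClifford 1).comp (by fun_prop))

theorem besselJ0_abs (u : ℝ) : besselJ0 |u| = besselJ0 u := by
  simp only [besselJ0_eq_besselClifford, div_pow, sq_abs]

theorem antitoneOn_besselJ0_sq_add_besselJ1_sq :
    AntitoneOn (fun u => besselJ0 u ^ 2 + besselJ1 u ^ 2) (Set.Ici 0) := by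
  have hderiv : ∀ u ∈ interior (Set.Ici (0 : ℝ)),
      HasDerivWithinAt (fun u => besselJ0 u ^ 2 + besselJ1 u ^ 2) (-(2 * besselJ1 u ^ 2 / u))
        (interior (Set.Ici 0)) u := by
    intro u hu
    have hu0 : u ≠ 0 := (interior_Ici (a := (0 : ℝ)) ▸ hu : u ∈ Set.Ioi 0).ne'
    refine (((hasDerivAt_besselJ0 u).pow 2).add
      ((hasDerivAt_besselJ1 hu0).pow 2)).hasDerivWithinAt.congr_deriv ?_
    push_cast
    ring
  refine antitoneOn_of_hasDerivWithinAt_nonpos (convex_Ici 0)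
    ((continuous_besselJ0.pow 2).add (continuous_besselJ1.pow 2)).continuousOn hderiv
    fun u hu => ?_
  have hu0 : 0 ≤ u := interior_subset hu
  exact neg_nonpos.2 (by positivity)

theorem abs_besselJ0_le_one (u : ℝ) : |besselJ0 u| ≤ 1 := by
  have h := antitoneOn_besselJ0_sq_add_besselJ1_sq Set.self_mem_Ici (abs_nonneg u) (abs_nonneg u)
  have h0 : besselJ0 0 = 1 := by simp [besselJ0_eq_besselClifford, besselClifford_apply_zero]
  have h1 : besselJ1 0 = 0 := by simp [besselJ1]
  simp only [besselJ0_abs, h0, h1] at h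
  rw [← sq_le_one_iff_abs_le_one]
  linarith [sq_nonneg (besselJ1 |u|)]

/-- The energy `w'² + (1 + 1 / (4u²)) w²` of `w = √u J₀(u)`, which solves
`w'' + (1 + 1 / (4u²)) w = 0`; it decreases because the potential does. -/
noncomputable def besselEnergy (u : ℝ) : ℝ :=
  (u * besselJ1 u - besselJ0 u / 2) ^ 2 / u + (u + 1 / (4 * u)) * besselJ0 u ^ 2

theorem hasDerivAt_besselEnergy {u : ℝ} (hu : u ≠ 0) :
    HasDerivAt besselEnergy (-(besselJ0 u ^ 2 / (2 * u ^ 2))) u := by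
  have h0 := hasDerivAt_besselJ0 u
  have hid := hasDerivAt_id' u
  refine (((((hid.mul (hasDerivAt_besselJ1 hu)).sub (h0.div_const 2)).pow 2).div hid hu).add
    ((hid.add ((hasDerivAt_const u (1 : ℝ)).div (hid.const_mul 4) (by simpa using hu))).mul
      (h0.pow 2))).congr_deriv ?_
  push_cast
  simp only [Pi.mul_apply, Pi.sub_apply, Pi.add_apply, Pi.div_apply, Pi.pow_apply]
  field_simp
  ring

theorem antitoneOn_besselEnergy : AntitoneOn besselEnergy (Set.Ioi 0) := by
  refine antitoneOn_of_hasDerivWithinAt_nonpos (convex_Ioi 0)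
    (fun u hu => (hasDerivAt_besselEnergy (ne_of_gt hu)).continuousAt.continuousWithinAt)
    (fun u hu => (hasDerivAt_besselEnergy (ne_of_gt (interior_subset hu))).hasDerivWithinAt)
    fun u _ => ?_
  exact neg_nonpos.2 (by positivity)

theorem mul_besselJ0_sq_le_besselEnergy {u : ℝ} (hu : 0 < u) :
    u * besselJ0 u ^ 2 ≤ besselEnergy u := by
  have h : 0 ≤ (u * besselJ1 u - besselJ0 u / 2) ^ 2 / u + 1 / (4 * u) * besselJ0 u ^ 2 := by
    positivity
  rw [besselEnergy, add_mul]
  linarith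

theorem isBigO_besselJ0 :
    besselJ0 =O[𝓟 (Set.Ioi 0)] fun u : ℝ => u ^ (-(1 / 2) : ℝ) := by
  refine isBigO_principal.2 ⟨max 1 √(besselEnergy 1), fun u (hu : 0 < u) => ?_⟩
  rw [Real.norm_eq_abs, Real.norm_of_nonneg (Real.rpow_nonneg hu.le _), Real.rpow_neg hu.le,
    ← Real.sqrt_eq_rpow, ← div_eq_mul_inv, le_div_iff₀ (Real.sqrt_pos.2 hu)]
  rcases le_total u 1 with hu1 | hu1
  · exact (mul_le_one₀ (abs_besselJ0_le_one u) (Real.sqrt_nonneg u)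
      (Real.sqrt_le_one.2 hu1)).trans (le_max_left _ _)
  · have h := (mul_besselJ0_sq_le_besselEnergy hu).trans
      (antitoneOn_besselEnergy (Set.mem_Ioi.2 one_pos) hu hu1)
    refine (Real.le_sqrt_of_sq_le ?_).trans (le_max_right _ _)
    rwa [mul_pow, sq_abs, Real.sq_sqrt hu.le, mul_comm]

/-! ### The Bessel transform -/

/-- The transform `x ↦ ∫_1^∞ g(r) J₀(2 √(x log r)) dr`, so that `φ_k` is the transform of
`Δ_k(r) / r ^ 2`. -/
noncomputable def besselLogTransform (g : ℝ → ℝ) (x : ℝ) : ℝ :=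
  ∫ r in Set.Ioi (1 : ℝ), g r * besselJ0 (2 * √(x * Real.log r))

section BesselLogTransform

variable {g : ℝ → ℝ}

theorem norm_mul_besselJ0_le (a u : ℝ) : ‖a * besselJ0 u‖ ≤ ‖a‖ := by
  rw [norm_mul]
  exact mul_le_of_le_one_right (norm_nonneg a) (abs_besselJ0_le_one u)

theorem aestronglyMeasurable_mul_besselJ0 (hg : IntegrableOn g (Set.Ioi 1)) (x : ℝ) :
    AEStronglyMeasurable (fun r => g r * besselJ0 (2 * √(x * Real.log r)))
      (volume.restrict (Set.Ioi 1)) :=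
  hg.aestronglyMeasurable.mul
    (continuous_besselJ0.measurable.comp (by fun_prop)).aestronglyMeasurable

theorem integrableOn_mul_besselJ0 (hg : IntegrableOn g (Set.Ioi 1)) (x : ℝ) :
    IntegrableOn (fun r => g r * besselJ0 (2 * √(x * Real.log r))) (Set.Ioi 1) :=
  hg.norm.mono' (aestronglyMeasurable_mul_besselJ0 hg x)
    (.of_forall fun _ => norm_mul_besselJ0_le _ _)

theorem continuous_besselLogTransform (hg : IntegrableOn g (Set.Ioi 1)) :
    Continuous (besselLogTransform g) :=
  continuous_of_dominated (aestronglyMeasurable_mul_besselJ0 hg)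
    (fun _ => .of_forall fun _ => norm_mul_besselJ0_le _ _) hg.norm
    (.of_forall fun _ => continuous_const.mul (continuous_besselJ0.comp (by fun_prop)))

theorem abs_besselLogTransform_le (hg : IntegrableOn g (Set.Ioi 1)) (x : ℝ) :
    |besselLogTransform g x| ≤ ∫ r in Set.Ioi 1, ‖g r‖ :=
  norm_integral_le_of_norm_le hg.norm (.of_forall fun _ => norm_mul_besselJ0_le _ _)

theorem isBigO_besselLogTransform
    (hg : IntegrableOn (fun r => g r * Real.log r ^ (-(1 / 4) : ℝ)) (Set.Ioi 1)) :
    besselLogTransform g =O[𝓟 (Set.Ioi 0)] fun x : ℝ => x ^ (-(1 / 4) : ℝ) := by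
  obtain ⟨C, hC⟩ := isBigO_principal.1 isBigO_besselJ0
  set w : ℝ → ℝ := fun r => g r * Real.log r ^ (-(1 / 4) : ℝ)
  have hscale {x l : ℝ} (hx : 0 < x) (hl : 0 < l) :
      (2 * √(x * l)) ^ (-(1 / 2) : ℝ) =
        2 ^ (-(1 / 2) : ℝ) * (x ^ (-(1 / 4) : ℝ) * l ^ (-(1 / 4) : ℝ)) := by
    rw [Real.mul_rpow zero_le_two (Real.sqrt_nonneg _), Real.sqrt_eq_rpow,
      ← Real.rpow_mul (by positivity), ← Real.mul_rpow hx.le hl.le]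
    norm_num
  refine isBigO_principal.2 ⟨C * 2 ^ (-(1 / 2) : ℝ) * ∫ r in Set.Ioi 1, ‖w r‖,
    fun x (hx : 0 < x) => ?_⟩
  rw [Real.norm_of_nonneg (r := x ^ _) (by positivity), mul_right_comm, ← integral_const_mul]
  refine norm_integral_le_of_norm_le (hg.norm.const_mul _)
    ((ae_restrict_iff' measurableSet_Ioi).2 (.of_forall fun r hr => ?_))
  have hlog : 0 < Real.log r := Real.log_pos hr
  have hbound := hC (2 * √(x * Real.log r)) (Set.mem_Ioi.2 (by positivity))
  rw [Real.norm_of_nonneg (r := _ ^ _) (by positivity), hscale hx hlog] at hbound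
  calc ‖g r * besselJ0 (2 * √(x * Real.log r))‖
      ≤ ‖g r‖ * (C * (2 ^ (-(1 / 2) : ℝ) *
          (x ^ (-(1 / 4) : ℝ) * Real.log r ^ (-(1 / 4) : ℝ)))) := by
        rw [norm_mul]
        gcongr
    _ = C * 2 ^ (-(1 / 2) : ℝ) * x ^ (-(1 / 4) : ℝ) * ‖w r‖ := by
        rw [norm_mul, Real.norm_of_nonneg (r := _ ^ _) (by positivity)]
        ring

end BesselLogTransform

theorem phik_eq_besselLogTransform (k : ℕ) :
    phik k = besselLogTransform fun r => Deltak k r / r ^ 2 := by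
  funext x
  simp only [phik, besselLogTransform, div_mul_eq_mul_div]

theorem integrableOn_deltak_div_sq_mul_log_rpow (k : ℕ) {a : ℝ} (ha : -1 < a) :
    IntegrableOn (fun r => Deltak k r / r ^ 2 * Real.log r ^ a) (Set.Ioi 1) := by
  obtain ⟨δ, hδ, hΔ⟩ := exists_isBigO_deltak_div_sq k
  have hm : Measurable fun r => Deltak k r / r ^ 2 * Real.log r ^ a :=
    ((measurable_deltak k).div (by fun_prop)).mul (by fun_prop)
  refine integrableOn_of_isBigO_principal measurableSet_Ioi hm.aestronglyMeasurable ?_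
    (integrableOn_log_rpow_mul_rpow ha hδ)
  exact ((hΔ.mono (principal_mono.2 Set.Ioi_subset_Ici_self)).mul (isBigO_refl _ _)).congr_right
    fun r => mul_comm _ _

theorem integrableOn_deltak_div_sq (k : ℕ) :
    IntegrableOn (fun r => Deltak k r / r ^ 2) (Set.Ioi 1) := by
  simpa only [Real.rpow_zero, mul_one] using
    integrableOn_deltak_div_sq_mul_log_rpow k neg_one_lt_zero

theorem stmt14 (k : ℕ) (hk : 0 < k) :
    (∀ x : ℝ, 0 ≤ x →
      IntegrableOn
        (fun r : ℝ => Deltak k r * besselJ0 (2 * Real.sqrt (x * Real.log r)) / r ^ 2)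
        (Set.Ioi 1)) ∧
    ContinuousOn (phik k) (Set.Ici 0) ∧
    (∃ M : ℝ, ∀ x : ℝ, 0 ≤ x → |phik k x| ≤ M) ∧
    (phik k) =O[atTop] (fun x : ℝ => x ^ (-(1 / 4 : ℝ))) := by
  have hinteg := integrableOn_deltak_div_sq k
  have hlog := integrableOn_deltak_div_sq_mul_log_rpow k (a := -(1 / 4)) (by norm_num)
  rw [phik_eq_besselLogTransform]
  refine ⟨fun x _ => ?_, (continuous_besselLogTransform hinteg).continuousOn,
    ⟨_, fun x _ => abs_besselLogTransform_le hinteg x⟩,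
    (isBigO_besselLogTransform hlog).mono (le_principal_iff.2 (Ioi_mem_atTop 0))⟩
  simpa only [div_mul_eq_mul_div] using integrableOn_mul_besselJ0 hinteg x
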